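/- arXiv:1003.6123 — 2 statements merged into one kernel-verified Lean document; each statement's English description precedes it below -/
import Mathlib

section
/- For all a b n : ℕ, if T(a+i) = T(b+i) for all i ≤ 2n, then SamePerm (n+1) a b; i.e., every subpermutation of π_T of length n+1 is determined by the factor of T of length 2n+1 beginning at its starting position. -/
/-!
The statement reduces to the overlap-freeness of the Thue–Morse word. If `i < j ≤ n` and
`p = j - i`, overlap-freeness gives an index `c ≤ p` at which the shifts at `a + i` and `a + j`
differ. The positions `i + c` and `j + c` are at most `2 * n`, so the comparison of the two shifts
is decided inside the given factor, and `b` can replace `a` (`prec_transfer`).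

Overlap-freeness (`exists_ne_of_pos`) is proved by strong induction on the period `p`. An even
period halves: restricting to every other letter of the overlap gives one of period `p / 2`. For an
odd period, one of `x + k` and `x + p + k` is even, and `T` differs on the pair `2m, 2m + 1`; by
periodicity all neighbouring letters in the first `p + 1` positions differ, so these letters
alternate and the first and last differ, against the period.
-/

/-- The Thue-Morse word: parity of the binary digit sum. -/
def TM (n : ℕ) : ℕ := (Nat.digits 2 n).sum % 2

/-- `Prec a b` : the shift of the Thue-Morse word at `a` is lexicographically
smaller than the shift at `b`. -/
def Prec (a b : ℕ) : Prop :=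
  ∃ c : ℕ, (∀ i < c, TM (a + i) = TM (b + i)) ∧ TM (a + c) < TM (b + c)

/-- The subpermutations of `π_T` of length `N` starting at `a` and `b` coincide. -/
def SamePerm (N a b : ℕ) : Prop :=
  ∀ i < N, ∀ j < N, (Prec (a + i) (a + j) ↔ Prec (b + i) (b + j))

open scoped Classical in
/-- `P a N i` : the 0-indexed rank of position `a+i` within the subpermutation
`π_T[a, a+N-1]`. -/
noncomputable def P (a N i : ℕ) : ℕ :=
  ((Finset.range N).filter (fun j => Prec (a + j) (a + i))).card

/-- The subpermutations `π_T[a,a+N-1]` and `π_T[b,b+N-1]` have the same form. -/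
def SameForm (N a b : ℕ) : Prop :=
  ∀ i < N - 1, (Prec (a + i) (a + (i + 1))) ↔ (Prec (b + i) (b + (i + 1)))

/-- The subpermutation `π_T[a,a+N-1]` is of type `k`. -/
def TypeK (k N a : ℕ) : Prop :=
  1 ≤ k ∧ 2 * k ≤ N ∧
  ∃ ε : ℤ, (ε = 1 ∨ ε = -1) ∧
    ∀ i < k, (P a N i : ℤ) = P a N (N - k + i) + ε

/-- Positions `a` and `b` form a complementary pair of type `k` of length `N`. -/
def CompPair (k N a b : ℕ) : Prop :=
  1 ≤ k ∧ 2 * k ≤ N ∧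
  ∃ ε : ℤ, (ε = 1 ∨ ε = -1) ∧
    (∀ i < k,
      (P a N i : ℤ) = P a N (N - k + i) + ε ∧
      (P b N i : ℤ) = P a N (N - k + i) ∧
      (P b N (N - k + i) : ℤ) = P a N i) ∧
    (∀ j, k ≤ j → j < N - k → P b N j = P a N j)

/-- The permutation complexity of the Thue-Morse word: the number of distinct
subpermutations of `π_T` of length `N`. -/
noncomputable def tau (N : ℕ) : ℕ :=
  Set.ncard (Set.range (fun a : ℕ => fun i j : Fin N => Prec (a + i) (a + j)))

lemma TM_lt_two (n : ℕ) : TM n < 2 := Nat.mod_lt _ (by norm_num)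

lemma TM_two_mul (n : ℕ) : TM (2 * n) = TM n := by
  rcases Nat.eq_zero_or_pos n with rfl | hn
  · rfl
  · simp [TM, Nat.digits_def' (b := 2) (n := 2 * n) (by norm_num) (by omega)]

lemma TM_two_mul_add_one (n : ℕ) : TM (2 * n + 1) = 1 - TM n := by
  have h : (2 * n + 1) / 2 = n := by omega
  have h' : (2 * n + 1) % 2 = 1 := by omega
  simp only [TM, Nat.digits_def' (b := 2) (n := 2 * n + 1) (by norm_num) (by omega), h, h',
    List.sum_cons]
  omega

lemma TM_ne_succ_of_even {m : ℕ} (hm : m % 2 = 0) : TM m ≠ TM (m + 1) := by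
  obtain ⟨k, rfl⟩ : ∃ k, m = 2 * k := ⟨m / 2, by omega⟩
  rw [TM_two_mul, TM_two_mul_add_one]
  have := TM_lt_two k
  omega

/-- Overlap-freeness: no factor of length `2 * p + 1` has period `p ≥ 1`. -/
lemma exists_ne_of_pos (p : ℕ) : ∀ x, 0 < p → ∃ c ≤ p, TM (x + c) ≠ TM (x + p + c) := by
  induction p using Nat.strong_induction_on with
  | _ p ih =>
  intro x hp
  by_contra! hper
  rcases Nat.even_or_odd' p with ⟨q, rfl | rfl⟩
  · obtain ⟨c, hc, hne⟩ := ih q (by omega) (x / 2) (by omega)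
    apply hne
    have h := hper (2 * c) (by omega)
    rcases Nat.even_or_odd' x with ⟨y, rfl | rfl⟩
    · rw [show 2 * y + 2 * c = 2 * (y + c) by ring,
        show 2 * y + 2 * q + 2 * c = 2 * (y + q + c) by ring, TM_two_mul, TM_two_mul] at h
      rwa [show 2 * y / 2 = y by omega]
    · rw [show 2 * y + 1 + 2 * c = 2 * (y + c) + 1 by ring,
        show 2 * y + 1 + 2 * q + 2 * c = 2 * (y + q + c) + 1 by ring,
        TM_two_mul_add_one, TM_two_mul_add_one] at h
      rw [show (2 * y + 1) / 2 = y by omega]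
      have := TM_lt_two (y + c)
      have := TM_lt_two (y + q + c)
      omega
  · have hadj : ∀ k < 2 * q + 1, TM (x + k) ≠ TM (x + k + 1) := by
      intro k hk
      by_cases hpar : (x + k) % 2 = 0
      · exact TM_ne_succ_of_even hpar
      · have h := TM_ne_succ_of_even (m := x + (2 * q + 1) + k) (by omega)
        rw [← hper k hk.le, add_assoc (x + (2 * q + 1)), ← hper (k + 1) hk, ← add_assoc] at h
        exact h
    have halt : ∀ k ≤ 2 * q + 1, TM (x + k) = (TM x + k) % 2 := by
      intro k
      induction k with
      | zero => intro _; have := TM_lt_two x; simp; omega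
      | succ k ihk =>
        intro hk
        have h₁ := ihk (by omega)
        have h₂ := hadj k (by omega)
        have := TM_lt_two (x + k + 1)
        rw [← add_assoc]
        omega
    have h₀ := hper 0 (by omega)
    have h₁ := halt (2 * q + 1) le_rfl
    have := TM_lt_two x
    simp only [add_zero] at h₀
    omega

/-- A lexicographic comparison carries over to any two shifts that agree with the given ones up to
and including some position `d` where the given ones differ. -/
lemma prec_transfer {u v u' v' d : ℕ} (hd : TM (u + d) ≠ TM (v + d))
    (hu : ∀ c ≤ d, TM (u + c) = TM (u' + c)) (hv : ∀ c ≤ d, TM (v + c) = TM (v' + c)) :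
    Prec u v → Prec u' v' := by
  rintro ⟨c, heq, hlt⟩
  have hcd : c ≤ d := by
    by_contra! h
    exact hd (heq d h)
  refine ⟨c, fun i hi => ?_, ?_⟩
  · rw [← hu i (by omega), ← hv i (by omega), heq i hi]
  · rwa [← hu c hcd, ← hv c hcd]

lemma not_prec_self (u : ℕ) : ¬ Prec u u := fun ⟨_, _, h⟩ => lt_irrefl _ h

lemma exists_ne_of_lt {i j n : ℕ} (a : ℕ) (hij : i < j) (hj : j ≤ n) :
    ∃ d, j + d ≤ 2 * n ∧ TM (a + i + d) ≠ TM (a + j + d) := by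
  obtain ⟨d, hd, hne⟩ := exists_ne_of_pos (j - i) (a + i) (by omega)
  exact ⟨d, by omega, by rwa [show a + i + (j - i) = a + j by omega] at hne⟩

/-- Every subpermutation of `π_T` of length `n+1` is determined by the factor of
`T` of length `2n+1` beginning at its starting position. -/
theorem samePerm_of_eq_factor (a b n : ℕ)
    (h : ∀ i ≤ 2 * n, TM (a + i) = TM (b + i)) :
    SamePerm (n + 1) a b := by
  intro i hi j hj
  rcases eq_or_ne i j with rfl | hij
  · simp [not_prec_self]
  obtain ⟨d, hid, hjd, hd⟩ : ∃ d, i + d ≤ 2 * n ∧ j + d ≤ 2 * n ∧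
      TM (a + i + d) ≠ TM (a + j + d) := by
    rcases lt_or_gt_of_ne hij with hlt | hlt
    · obtain ⟨d, hd, hne⟩ := exists_ne_of_lt a hlt (by omega : j ≤ n)
      exact ⟨d, by omega, hd, hne⟩
    · obtain ⟨d, hd, hne⟩ := exists_ne_of_lt a hlt (by omega : i ≤ n)
      exact ⟨d, hd, by omega, hne.symm⟩
  have agree : ∀ k, k + d ≤ 2 * n → ∀ c ≤ d, TM (a + k + c) = TM (b + k + c) := by
    intro k hk c hc
    rw [add_assoc, add_assoc]
    exact h (k + c) (by omega)
  have hd' : TM (b + i + d) ≠ TM (b + j + d) := by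
    rwa [← agree i hid d le_rfl, ← agree j hjd d le_rfl]
  exact ⟨prec_transfer hd (agree i hid) (agree j hjd),
    prec_transfer hd' (fun c hc => (agree i hid c hc).symm) (fun c hc => (agree j hjd c hc).symm)⟩
end

section
/- Let n > 4 and write n = 2^r + c with r ≥ 2 and 0 ≤ c < 2^r. Let a b : ℕ be such that the subpermutations π_T[a,a+n] and π_T[b,b+n] (of length n+1) have the same form. (a) If c < 2^{r−1} + 1, then SamePerm (n+1) a b or positions a and b form a complementary pair of type c+1 of length n+1. (b) If 2^{r−1} + 1 ≤ c, then SamePerm (n+1) a b. -/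
/-! ### Letters of the Thue–Morse word -/

theorem TM_lt (x : ℕ) : TM x < 2 := Nat.mod_lt _ (by norm_num)

theorem TM_even (x : ℕ) : TM (2 * x) = TM x := by
  rcases Nat.eq_zero_or_pos x with rfl | hx
  · rfl
  · unfold TM
    rw [Nat.digits_def' (by norm_num) (by omega)]
    simp

theorem TM_odd (x : ℕ) : TM (2 * x + 1) = 1 - TM x := by
  unfold TM
  rw [Nat.digits_def' (by norm_num) (by omega)]
  have h1 : (2 * x + 1) % 2 = 1 := by omega
  have h2 : (2 * x + 1) / 2 = x := by omega
  rw [h1, h2, List.sum_cons]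
  omega

/-- The Thue–Morse word contains no cube of a letter. -/
theorem TM_no_cube (x : ℕ) : ¬ (TM x = TM (x + 1) ∧ TM (x + 1) = TM (x + 2)) := by
  rintro ⟨h1, h2⟩
  rcases Nat.even_or_odd' x with ⟨k, rfl | rfl⟩
  · rw [TM_odd, TM_even] at h1
    have := TM_lt k
    omega
  · have e1 : 2 * k + 1 + 1 = 2 * (k + 1) := by ring
    have e2 : 2 * k + 1 + 2 = 2 * (k + 1) + 1 := by ring
    rw [e1, e2, TM_odd, TM_even] at h2
    have := TM_lt (k + 1)
    omega

/-- A block of five letters determines the parity of its position: otherwise three consecutive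
letters of the desubstituted word would coincide. -/
theorem parity_of_five {x y : ℕ} (h : ∀ i < 5, TM (2 * x + i) = TM (2 * y + 1 + i)) : False := by
  have h0 := h 0 (by norm_num)
  have h1 := h 1 (by norm_num)
  have h2 := h 2 (by norm_num)
  have h3 := h 3 (by norm_num)
  have h4 := h 4 (by norm_num)
  rw [show 2 * x + 0 = 2 * x by ring, show 2 * y + 1 + 0 = 2 * y + 1 by ring,
    TM_even, TM_odd] at h0
  rw [show 2 * y + 1 + 1 = 2 * (y + 1) by ring, TM_even, TM_odd] at h1
  rw [show 2 * x + 2 = 2 * (x + 1) by ring, show 2 * y + 1 + 2 = 2 * (y + 1) + 1 by ring,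
    TM_even, TM_odd] at h2
  rw [show 2 * x + 3 = 2 * (x + 1) + 1 by ring, show 2 * y + 1 + 3 = 2 * (y + 2) by ring,
    TM_even, TM_odd] at h3
  rw [show 2 * x + 4 = 2 * (x + 2) by ring, show 2 * y + 1 + 4 = 2 * (y + 2) + 1 by ring,
    TM_even, TM_odd] at h4
  have l0 := TM_lt x
  have l1 := TM_lt (x + 1)
  have l2 := TM_lt (x + 2)
  have l3 := TM_lt (y + 1)
  have l4 := TM_lt (y + 2)
  exact TM_no_cube x ⟨by omega, by omega⟩

/-! ### The lexicographic order on shifts -/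

theorem Prec.asymm {x y : ℕ} (h : Prec x y) : ¬ Prec y x := by
  obtain ⟨c, hc, hc'⟩ := h
  rintro ⟨d, hd, hd'⟩
  rcases lt_trichotomy c d with h | rfl | h
  · have := hd c h
    omega
  · omega
  · have := hc d h
    omega

theorem Prec.irrefl (x : ℕ) : ¬ Prec x x := fun h => h.asymm h

theorem Prec.trans {x y z : ℕ} (h : Prec x y) (h' : Prec y z) : Prec x z := by
  obtain ⟨c, hc, hc'⟩ := h
  obtain ⟨d, hd, hd'⟩ := h'
  rcases lt_trichotomy c d with h | rfl | h
  · exact ⟨c, fun i hi => (hc i hi).trans (hd i (hi.trans h)), by rw [← hd c h]; exact hc'⟩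
  · exact ⟨c, fun i hi => (hc i hi).trans (hd i hi), hc'.trans hd'⟩
  · exact ⟨d, fun i hi => (hc i (hi.trans h)).trans (hd i hi), by rw [hc d h]; exact hd'⟩

theorem Prec.letter_le {x y : ℕ} (h : Prec x y) : TM x ≤ TM y := by
  obtain ⟨c, hc, hc'⟩ := h
  rcases Nat.eq_zero_or_pos c with rfl | hpos
  · exact hc'.le
  · exact (hc 0 hpos).le

theorem prec_of_letter_lt {x y : ℕ} (h : TM x < TM y) : Prec x y :=
  ⟨0, by simp, h⟩

/-- An increase of the Thue–Morse permutation at `x` is the same as the letter `0` at `x`. -/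
theorem prec_succ_iff (x : ℕ) : Prec x (x + 1) ↔ TM x = 0 := by
  have hc := TM_no_cube x
  have l0 := TM_lt x
  have l1 := TM_lt (x + 1)
  have l2 := TM_lt (x + 2)
  constructor
  · intro h
    by_contra h0
    have hle := h.letter_le
    refine h.asymm ⟨1, ?_, ?_⟩
    · intro i hi
      obtain rfl : i = 0 := by omega
      simp only [add_zero]
      omega
    · rw [show x + 1 + 1 = x + 2 by ring]
      omega
  · intro h
    by_cases h1 : TM (x + 1) = 1
    · exact prec_of_letter_lt (by omega)
    · refine ⟨1, ?_, ?_⟩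
      · intro i hi
        obtain rfl : i = 0 := by omega
        simp only [add_zero]
        omega
      · rw [show x + 1 + 1 = x + 2 by ring]
        omega

theorem Prec.even {x y : ℕ} (h : Prec x y) : Prec (2 * x) (2 * y) := by
  obtain ⟨c, hc, hc'⟩ := h
  refine ⟨2 * c, ?_, ?_⟩
  · intro i hi
    rcases Nat.even_or_odd' i with ⟨k, rfl | rfl⟩
    · rw [← mul_add, ← mul_add, TM_even, TM_even]
      exact hc k (by omega)
    · rw [← add_assoc, ← add_assoc, ← mul_add, ← mul_add, TM_odd, TM_odd, hc k (by omega)]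
  · rw [← mul_add, ← mul_add, TM_even, TM_even]
    exact hc'

theorem Prec.odd {x y : ℕ} (h : Prec x y) (hxy : TM x = TM y) :
    Prec (2 * x + 1) (2 * y + 1) := by
  obtain ⟨c, hc, hc'⟩ := h.even
  rcases c with _ | c
  · simp only [add_zero, TM_even] at hc'
    omega
  · refine ⟨c, ?_, ?_⟩
    · intro i hi
      have := hc (i + 1) (by omega)
      rwa [show 2 * x + 1 + i = 2 * x + (i + 1) by ring,
        show 2 * y + 1 + i = 2 * y + (i + 1) by ring]
    · rwa [show 2 * x + 1 + c = 2 * x + (c + 1) by ring,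
        show 2 * y + 1 + c = 2 * y + (c + 1) by ring]

/-- Shifts starting at odd positions with letter `0` lie below all shifts starting at even
positions. -/
theorem mixed_one {x y : ℕ} (hy : TM y = 1) : Prec (2 * y + 1) (2 * x) := by
  have hc := TM_no_cube y
  have a0 := TM_lt x
  have a1 := TM_lt (x + 1)
  have b1 := TM_lt (y + 1)
  have b2 := TM_lt (y + 2)
  have x0 := TM_even x
  have x1 := TM_odd x
  have x2 := TM_even (x + 1)
  have x3 := TM_odd (x + 1)
  have y0 := TM_odd y
  have y1 := TM_even (y + 1)
  have y2 := TM_odd (y + 1)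
  have y3 := TM_even (y + 2)
  rw [show 2 * (x + 1) = 2 * x + 2 by ring] at x2 x3
  rw [show 2 * (y + 1) = 2 * y + 1 + 1 by ring] at y1 y2
  rw [show 2 * (y + 2) = 2 * y + 1 + 3 by ring] at y3
  by_cases h0 : TM x = 1
  · exact ⟨0, by simp, by simp only [add_zero]; omega⟩
  by_cases h1 : TM (y + 1) = 0
  · refine ⟨1, ?_, by omega⟩
    intro i hi
    interval_cases i
    simp only [add_zero]; omega
  by_cases h2 : TM (x + 1) = 1
  · refine ⟨2, ?_, by simp only [add_assoc] at *; norm_num at *; omega⟩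
    intro i hi
    interval_cases i <;> (try simp only [add_zero]) <;> omega
  · refine ⟨3, ?_, by simp only [add_assoc] at *; norm_num at *; omega⟩
    intro i hi
    interval_cases i <;> simp only [add_zero, add_assoc] at * <;> norm_num at * <;> omega

/-- Shifts starting at odd positions with letter `1` lie above all shifts starting at even
positions. -/
theorem mixed_zero {x y : ℕ} (hy : TM y = 0) : Prec (2 * x) (2 * y + 1) := by
  have hc := TM_no_cube y
  have a0 := TM_lt x
  have a1 := TM_lt (x + 1)
  have b1 := TM_lt (y + 1)
  have b2 := TM_lt (y + 2)
  have x0 := TM_even x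
  have x1 := TM_odd x
  have x2 := TM_even (x + 1)
  have x3 := TM_odd (x + 1)
  have y0 := TM_odd y
  have y1 := TM_even (y + 1)
  have y2 := TM_odd (y + 1)
  have y3 := TM_even (y + 2)
  rw [show 2 * (x + 1) = 2 * x + 2 by ring] at x2 x3
  rw [show 2 * (y + 1) = 2 * y + 1 + 1 by ring] at y1 y2
  rw [show 2 * (y + 2) = 2 * y + 1 + 3 by ring] at y3
  by_cases h0 : TM x = 0
  · exact ⟨0, by simp, by simp only [add_zero]; omega⟩
  by_cases h1 : TM (y + 1) = 1
  · refine ⟨1, ?_, by omega⟩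
    intro i hi
    interval_cases i
    simp only [add_zero]; omega
  by_cases h2 : TM (x + 1) = 0
  · refine ⟨2, ?_, by simp only [add_assoc] at *; norm_num at *; omega⟩
    intro i hi
    interval_cases i <;> (try simp only [add_zero]) <;> omega
  · refine ⟨3, ?_, by simp only [add_assoc] at *; norm_num at *; omega⟩
    intro i hi
    interval_cases i <;> simp only [add_zero, add_assoc] at * <;> norm_num at * <;> omega

/-- Distinct shifts are comparable, i.e. the Thue–Morse word is not eventually periodic. Equal
parities are halved; opposite parities are always distinguished. -/
theorem prec_total : ∀ x y : ℕ, x ≠ y → Prec x y ∨ Prec y x := by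
  intro x
  induction x using Nat.strong_induction_on with
  | _ x ih =>
    intro y hne
    rcases Nat.even_or_odd' x with ⟨k, rfl | rfl⟩ <;>
      rcases Nat.even_or_odd' y with ⟨l, rfl | rfl⟩
    · rcases Nat.eq_zero_or_pos k with rfl | hk
      ·
        -- The recursion does not decrease at `x = 0`, so induct on the other argument.
        have key : ∀ l : ℕ, 0 < l → Prec 0 l ∨ Prec l 0 := by
          intro l
          induction l using Nat.strong_induction_on with
          | _ l ihl =>
            intro hl
            rcases Nat.even_or_odd' l with ⟨m, rfl | rfl⟩
            · exact (ihl m (by omega) (by omega)).imp Prec.even Prec.even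
            · have := TM_lt m
              rcases (by omega : TM m = 0 ∨ TM m = 1) with h | h
              · exact Or.inl (mixed_zero (x := 0) h)
              · exact Or.inr (mixed_one (x := 0) h)
        exact key (2 * l) (by omega)
      · exact (ih k (by omega) l (by omega)).imp Prec.even Prec.even
    · have := TM_lt l
      rcases (by omega : TM l = 0 ∨ TM l = 1) with h | h
      · exact Or.inl (mixed_zero h)
      · exact Or.inr (mixed_one h)
    · have := TM_lt k
      rcases (by omega : TM k = 0 ∨ TM k = 1) with h | h
      · exact Or.inr (mixed_zero h)
      · exact Or.inl (mixed_one h)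
    · rcases lt_trichotomy (TM k) (TM l) with h | h | h
      · exact Or.inr (prec_of_letter_lt (by rw [TM_odd, TM_odd]; have := TM_lt l; omega))
      · exact (ih k (by omega) l (by omega)).imp (Prec.odd · h) (Prec.odd · h.symm)
      · exact Or.inl (prec_of_letter_lt (by rw [TM_odd, TM_odd]; have := TM_lt k; omega))

theorem prec_even_iff (x y : ℕ) : Prec (2 * x) (2 * y) ↔ Prec x y := by
  refine ⟨fun h => ?_, Prec.even⟩
  rcases eq_or_ne x y with rfl | hne
  · exact absurd h (Prec.irrefl _)
  · exact (prec_total x y hne).resolve_right fun h' => h.asymm h'.even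

theorem prec_odd_iff (x y : ℕ) :
    Prec (2 * x + 1) (2 * y + 1) ↔ TM y < TM x ∨ (TM x = TM y ∧ Prec x y) := by
  constructor
  · intro h
    have hle := h.letter_le
    rw [TM_odd, TM_odd] at hle
    have lx := TM_lt x
    have ly := TM_lt y
    rcases (by omega : TM y < TM x ∨ TM x = TM y) with h' | h'
    · exact Or.inl h'
    · refine Or.inr ⟨h', ?_⟩
      rcases eq_or_ne x y with rfl | hne
      · exact absurd h (Prec.irrefl _)
      · exact (prec_total x y hne).resolve_right fun h'' => h.asymm (h''.odd h'.symm)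
  · rintro (h | ⟨h, h'⟩)
    · exact prec_of_letter_lt (by rw [TM_odd, TM_odd]; have := TM_lt x; omega)
    · exact h'.odd h

theorem prec_odd_even_iff (x y : ℕ) : Prec (2 * y + 1) (2 * x) ↔ TM y = 1 := by
  refine ⟨fun h => ?_, mixed_one⟩
  by_contra h0
  have := TM_lt y
  exact h.asymm (mixed_zero (by omega))

theorem prec_even_odd_iff (x y : ℕ) : Prec (2 * x) (2 * y + 1) ↔ TM y = 0 := by
  refine ⟨fun h => ?_, mixed_zero⟩
  by_contra h0
  have := TM_lt y
  exact h.asymm (mixed_one (by omega))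

/-! ### Agreement and swaps -/

/-- The subpermutations starting at `a` and `b` order the offsets `i` and `j` the same way. -/
def Agree (a b i j : ℕ) : Prop := Prec (a + i) (a + j) ↔ Prec (b + i) (b + j)

/-- Among the offsets `0, …, n`, the orders at `a` and `b` differ exactly on the pairs at
distance `p`, each of which is increasing at `a` and decreasing at `b`. -/
def SwappedAt (n a b p : ℕ) : Prop :=
  (∀ i, i + p ≤ n → Prec (a + i) (a + (i + p)) ∧ Prec (b + (i + p)) (b + i)) ∧
  (∀ i ≤ n, ∀ j ≤ n, j ≠ i + p → i ≠ j + p → Agree a b i j)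

/-- The orders at `a` and `b` are swapped at a distance `p = 2^(s+1)` with `p ≤ n ≤ 3p/2`. -/
def Swapped (n a b : ℕ) : Prop :=
  ∃ s, 2 ^ (s + 1) ≤ n ∧ n ≤ 3 * 2 ^ s ∧ SwappedAt n a b (2 ^ (s + 1))

theorem Agree.symm {a b i j : ℕ} (h : Agree a b i j) : Agree b a i j := Iff.symm h

theorem SwappedAt.rank_middle {n a b p j : ℕ} (h : SwappedAt n a b p) (hj : j < p) (hjn : n < j + p)
    (hp : p ≤ n) : P a (n + 1) j = P b (n + 1) j := by
  classical
  unfold P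
  congr 1
  apply Finset.filter_congr
  intro k hk
  rw [Finset.mem_range] at hk
  exact h.2 k (by omega) j (by omega) (by omega) (by omega)

/-- Swapped pairs occupy adjacent ranks: an offset strictly between the two at `a` would be
compared with both in the same way at `b`, where their order is reversed. -/
theorem SwappedAt.ranks {n a b p : ℕ} (h : SwappedAt n a b p) (hn : n < 2 * p) {i : ℕ}
    (hi : i + p ≤ n) :
    P a (n + 1) (i + p) = P a (n + 1) i + 1 ∧ P b (n + 1) i = P a (n + 1) i + 1 ∧
      P b (n + 1) (i + p) = P a (n + 1) i := by
  classical
  obtain ⟨ha, hb⟩ := h.1 i hi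
  have hag1 : ∀ k ≤ n, k ≠ i + p → Agree a b k i := fun k hk hne =>
    h.2 k hk i (by omega) (by omega) hne
  have hag2 : ∀ k ≤ n, k ≠ i → Agree a b k (i + p) := fun k hk hne =>
    h.2 k hk (i + p) hi (by omega) (by omega)
  have hpos : 0 < p := by omega
  unfold P
  refine ⟨?_, ?_, ?_⟩
  · rw [← Finset.card_insert_of_notMem (a := i)]
    · congr 1
      ext k
      simp only [Finset.mem_filter, Finset.mem_range, Finset.mem_insert]
      constructor
      · rintro ⟨hk, hk'⟩
        by_cases hki : k = i
        · exact Or.inl hki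
        · have hkp : k ≠ i + p := by
            rintro rfl
            exact Prec.irrefl _ hk'
          exact Or.inr ⟨hk, (hag1 k (by omega) hkp).2 (((hag2 k (by omega) hki).1 hk').trans hb)⟩
      · rintro (rfl | ⟨hk, hk'⟩)
        · exact ⟨by omega, ha⟩
        · exact ⟨hk, hk'.trans ha⟩
    · simp [Prec.irrefl]
  · rw [← Finset.card_insert_of_notMem (a := i + p)]
    · congr 1
      ext k
      simp only [Finset.mem_filter, Finset.mem_range, Finset.mem_insert]
      constructor
      · rintro ⟨hk, hk'⟩
        by_cases hkp : k = i + p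
        · exact Or.inl hkp
        · exact Or.inr ⟨hk, (hag1 k (by omega) hkp).2 hk'⟩
      · rintro (rfl | ⟨hk, hk'⟩)
        · exact ⟨by omega, hb⟩
        · refine ⟨hk, (hag1 k (by omega) ?_).1 hk'⟩
          rintro rfl
          exact ha.asymm hk'
    · simp [ha.asymm]
  · congr 1
    apply Finset.filter_congr
    intro k hk
    rw [Finset.mem_range] at hk
    constructor
    · intro hk'
      have hkp : k ≠ i + p := by
        rintro rfl
        exact Prec.irrefl _ hk'
      exact (hag1 k (by omega) hkp).2 (hk'.trans hb)
    · intro hk'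
      have hki : k ≠ i := by
        rintro rfl
        exact Prec.irrefl _ hk'
      exact (hag2 k (by omega) hki).1 (hk'.trans ha)

/-! ### Words of length three and four -/

/-- The `i`-th letter of the window of the Thue–Morse word starting at a position `16 q + s`,
expressed by the letters `t = TM q` and `u = TM (q + 1)`, for `s < 16` and `i < 16`.
The sum of the four quotients has the parity of the sum of the four lowest binary digits, also when
`16 ≤ s + i < 32`, where the digit `16` contributes the even amount `16 + 8 + 4 + 2`. -/
def window (s t u i : ℕ) : ℕ :=
  ((s + i) + (s + i) / 2 + (s + i) / 4 + (s + i) / 8 + (if s + i < 16 then t else u)) % 2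

/-- Lexicographic comparison, at offsets `i` and `j`, of a word `f` on its next five letters. -/
abbrev winLt (f : ℕ → ℕ) (i j : ℕ) : Prop :=
  ∃ c < 5, (∀ t < c, f (i + t) = f (j + t)) ∧ f (i + c) < f (j + c)

instance (f : ℕ → ℕ) (i j : ℕ) : Decidable (winLt f i j) := inferInstance

theorem TM_sixteen (q k : ℕ) (hk : k < 16) :
    TM (16 * q + k) = (k + k / 2 + k / 4 + k / 8 + TM q) % 2 := by
  have half : ∀ m, TM m = (m + TM (m / 2)) % 2 := by
    intro m
    rcases Nat.even_or_odd' m with ⟨l, rfl | rfl⟩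
    · rw [TM_even, Nat.mul_div_cancel_left l (by norm_num)]
      have := TM_lt l
      omega
    · rw [TM_odd, show (2 * l + 1) / 2 = l by omega]
      have := TM_lt l
      omega
  have h1 := half (16 * q + k)
  have h2 := half (8 * q + k / 2)
  have h3 := half (4 * q + k / 4)
  have h4 := half (2 * q + k / 8)
  rw [show (16 * q + k) / 2 = 8 * q + k / 2 by omega] at h1
  rw [show (8 * q + k / 2) / 2 = 4 * q + k / 4 by omega] at h2
  rw [show (4 * q + k / 4) / 2 = 2 * q + k / 8 by omega] at h3
  rw [show (2 * q + k / 8) / 2 = q by omega] at h4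
  generalize k / 2 = k2 at *
  generalize k / 4 = k4 at *
  generalize k / 8 = k8 at *
  omega

theorem exists_window (x : ℕ) :
    ∃ s < 16, ∃ t < 2, ∃ t' < 2, ∀ i < 9, TM (x + i) = window s t t' i := by
  refine ⟨x % 16, by omega, TM (x / 16), TM_lt _, TM (x / 16 + 1), TM_lt _, ?_⟩
  intro i hi
  unfold window
  split_ifs with h
  · rw [← TM_sixteen _ _ h]
    congr 1
    omega
  · have := TM_sixteen (x / 16 + 1) (x % 16 + i - 16) (by omega)
    rw [show 16 * (x / 16 + 1) + (x % 16 + i - 16) = x + i by omega] at this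
    rw [this]
    omega

set_option synthInstance.maxHeartbeats 400000 in
set_option synthInstance.maxSize 10000 in
theorem winLt_total : ∀ s < 16, ∀ t < 2, ∀ t' < 2, ∀ i < 5, ∀ j < 5, i ≠ j →
    winLt (window s t t') i j ∨ winLt (window s t t') j i := by
  decide +kernel

theorem prec_iff_winLt {x : ℕ} {s t t' : ℕ} (hs : s < 16) (ht : t < 2) (ht' : t' < 2)
    (h : ∀ i < 9, TM (x + i) = window s t t' i) {i j : ℕ} (hi : i < 5) (hj : j < 5) :
    Prec (x + i) (x + j) ↔ winLt (window s t t') i j := by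
  have key : ∀ i < 5, ∀ j < 5, winLt (window s t t') i j → Prec (x + i) (x + j) := by
    rintro i hi j hj ⟨c, hc, hc1, hc2⟩
    refine ⟨c, fun k hk => ?_, ?_⟩
    · rw [add_assoc, add_assoc, h _ (by omega), h _ (by omega)]
      exact hc1 k hk
    · rw [add_assoc, add_assoc, h _ (by omega), h _ (by omega)]
      exact hc2
  refine ⟨fun hp => ?_, key i hi j hj⟩
  have hne : i ≠ j := by
    rintro rfl
    exact Prec.irrefl _ hp
  exact (winLt_total s hs t ht t' ht' i hi j hj hne).resolve_right
    fun hji => hp.asymm (key j hj i hi hji)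

/-- The dichotomy on finite windows, for a common block of `n` letters and swaps at distance
`p`. -/
abbrev winDich (n p : ℕ) (f g : ℕ → ℕ) : Prop :=
  (∀ i < n, f i = g i) →
    (∀ i < n + 1, ∀ j < n + 1, winLt f i j ↔ winLt g i j) ∨
    ((∀ i < n + 1 - p, winLt f i (i + p) ∧ winLt g (i + p) i) ∨
     (∀ i < n + 1 - p, winLt g i (i + p) ∧ winLt f (i + p) i)) ∧
    (∀ i < n + 1, ∀ j < n + 1, j ≠ i + p → i ≠ j + p → (winLt f i j ↔ winLt g i j))

instance (n p : ℕ) (f g : ℕ → ℕ) : Decidable (winDich n p f g) := inferInstance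

theorem winDich_three : ∀ s < 16, ∀ t < 2, ∀ t' < 2, ∀ s' < 16, ∀ v < 2, ∀ v' < 2,
    winDich 3 2 (window s t t') (window s' v v') := by
  decide +kernel

theorem winDich_four : ∀ s < 16, ∀ t < 2, ∀ t' < 2, ∀ s' < 16, ∀ v < 2, ∀ v' < 2,
    winDich 4 4 (window s t t') (window s' v v') := by
  decide +kernel

/-- Transfer of the finite dichotomy to positions of the Thue–Morse word. -/
theorem dichotomy_of_window {n s : ℕ} (hn : n < 5) (hp : 2 ^ (s + 1) ≤ n) (hps : n ≤ 3 * 2 ^ s)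
    (H : ∀ k < 16, ∀ t < 2, ∀ t' < 2, ∀ k' < 16, ∀ v < 2, ∀ v' < 2,
      winDich n (2 ^ (s + 1)) (window k t t') (window k' v v'))
    (a b : ℕ) (hab : ∀ i < n, TM (a + i) = TM (b + i)) :
    (∀ i ≤ n, ∀ j ≤ n, Agree a b i j) ∨ Swapped n a b ∨ Swapped n b a := by
  obtain ⟨k, hk, t, ht, t', ht', hw⟩ := exists_window a
  obtain ⟨k', hk', v, hv, v', hv', hw'⟩ := exists_window b
  have hA : ∀ i ≤ n, ∀ j ≤ n, (Prec (a + i) (a + j) ↔ winLt (window k t t') i j) :=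
    fun i hi j hj => prec_iff_winLt hk ht ht' hw (by omega) (by omega)
  have hB : ∀ i ≤ n, ∀ j ≤ n, (Prec (b + i) (b + j) ↔ winLt (window k' v v') i j) :=
    fun i hi j hj => prec_iff_winLt hk' hv hv' hw' (by omega) (by omega)
  have hag : ∀ i ≤ n, ∀ j ≤ n, (winLt (window k t t') i j ↔ winLt (window k' v v') i j) →
      Agree a b i j := fun i hi j hj h => (hA i hi j hj).trans (h.trans (hB i hi j hj).symm)
  have hpre : ∀ i < n, window k t t' i = window k' v v' i := fun i hi => by
    rw [← hw i (by omega), ← hw' i (by omega), hab i hi]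
  rcases H k hk t ht t' ht' k' hk' v hv v' hv' hpre with h | ⟨h | h, h'⟩
  · exact Or.inl fun i hi j hj => hag i hi j hj (h i (by omega) j (by omega))
  · refine Or.inr (Or.inl ⟨s, hp, hps, fun i hi => ?_, fun i hi j hj h1 h2 =>
      hag i hi j hj (h' i (by omega) j (by omega) h1 h2)⟩)
    obtain ⟨e1, e2⟩ := h i (by omega)
    exact ⟨(hA _ (by omega) _ hi).2 e1, (hB _ hi _ (by omega)).2 e2⟩
  · refine Or.inr (Or.inr ⟨s, hp, hps, fun i hi => ?_, fun i hi j hj h1 h2 =>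
      (hag i hi j hj (h' i (by omega) j (by omega) h1 h2)).symm⟩)
    obtain ⟨e1, e2⟩ := h i (by omega)
    exact ⟨(hB _ (by omega) _ hi).2 e1, (hA _ hi _ (by omega)).2 e2⟩

/-! ### Desubstitution -/

/-- The hypothesis `hodd` asks for common letters only at the desubstituted odd positions: the
comparison of two even positions uses no letter, and an odd position is compared with an even
one through the letter of the odd one alone. -/
theorem agree_double {a b q q' : ℕ}
    (hodd : ∀ k, (q = 2 * k + 1 ∨ q' = 2 * k + 1) → TM (a + k) = TM (b + k))
    (h : q % 2 = q' % 2 → Agree a b (q / 2) (q' / 2)) :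
    Agree (2 * a) (2 * b) q q' := by
  unfold Agree at *
  rcases Nat.even_or_odd' q with ⟨k, rfl | rfl⟩ <;>
    rcases Nat.even_or_odd' q' with ⟨l, rfl | rfl⟩
  · have h := h (by omega)
    rw [show 2 * k / 2 = k by omega, show 2 * l / 2 = l by omega] at h
    simp only [← mul_add, prec_even_iff]
    exact h
  · simp only [← add_assoc, ← mul_add, prec_even_odd_iff, hodd l (Or.inr rfl)]
  · simp only [← add_assoc, ← mul_add, prec_odd_even_iff, hodd k (Or.inl rfl)]
  · have h := h (by omega)
    rw [show (2 * k + 1) / 2 = k by omega, show (2 * l + 1) / 2 = l by omega] at h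
    simp only [← add_assoc, ← mul_add, prec_odd_iff, hodd k (Or.inl rfl), hodd l (Or.inr rfl), h]

/-- Swaps survive the substitution. The signs do not change at odd positions, since the letters
there, being common to both words, cannot separate a swapped pair. -/
theorem swapped_double {n m e a b : ℕ} (he : e < 2) (hm : m = (n + e + 1) / 2)
    (hlet : ∀ k < m, TM (a + k) = TM (b + k)) (h : Swapped m a b) :
    (∀ i ≤ n, ∀ j ≤ n, Agree (2 * a + e) (2 * b + e) i j) ∨
      Swapped n (2 * a + e) (2 * b + e) := by
  obtain ⟨s, h1, h2, h3, h4⟩ := h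
  have hpp : 2 ^ (s + 1 + 1) = 2 * 2 ^ (s + 1) := by ring
  have hss : 2 ^ (s + 1) = 2 * 2 ^ s := by ring
  have hag : ∀ i ≤ n, ∀ j ≤ n, j ≠ i + 2 ^ (s + 1 + 1) → i ≠ j + 2 ^ (s + 1 + 1) →
      Agree (2 * a + e) (2 * b + e) i j := by
    intro i hi j hj hij hji
    have := agree_double (a := a) (b := b) (q := e + i) (q' := e + j)
      (fun k hk => hlet k (by omega))
      (fun hpar => h4 _ (by omega) _ (by omega) (by omega) (by omega))
    simpa only [Agree, add_assoc] using this
  by_cases hn : 2 ^ (s + 1 + 1) ≤ n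
  · refine Or.inr ⟨s + 1, hn, by omega, ?_, hag⟩
    intro i hi
    rw [hpp] at hi ⊢
    generalize 2 ^ (s + 1) = p at *
    rcases Nat.even_or_odd' (e + i) with ⟨k, hk | hk⟩
    · obtain ⟨e1, e2⟩ := h3 k (by omega)
      rw [show 2 * a + e + i = 2 * (a + k) by omega,
        show 2 * a + e + (i + 2 * p) = 2 * (a + (k + p)) by omega,
        show 2 * b + e + i = 2 * (b + k) by omega,
        show 2 * b + e + (i + 2 * p) = 2 * (b + (k + p)) by omega]
      exact ⟨e1.even, e2.even⟩
    · obtain ⟨e1, e2⟩ := h3 k (by omega)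
      rw [show 2 * a + e + i = 2 * (a + k) + 1 by omega,
        show 2 * a + e + (i + 2 * p) = 2 * (a + (k + p)) + 1 by omega,
        show 2 * b + e + i = 2 * (b + k) + 1 by omega,
        show 2 * b + e + (i + 2 * p) = 2 * (b + (k + p)) + 1 by omega]
      have l1 := hlet k (by omega)
      have l2 := hlet (k + p) (by omega)
      have o1 := e1.letter_le
      have o2 := e2.letter_le
      exact ⟨e1.odd (by omega), e2.odd (by omega)⟩
  · exact Or.inl fun i hi j hj => hag i hi j hj (by omega) (by omega)

/-- Two occurrences of the same block of `n` letters order their `n + 1` offsets either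
identically or up to a swap. -/
theorem dichotomy (n : ℕ) (hn : 3 ≤ n) (a b : ℕ) (hab : ∀ i < n, TM (a + i) = TM (b + i)) :
    (∀ i ≤ n, ∀ j ≤ n, Agree a b i j) ∨ Swapped n a b ∨ Swapped n b a := by
  induction n using Nat.strong_induction_on generalizing a b with
  | _ n ih =>
    rcases (by omega : n = 3 ∨ n = 4 ∨ 5 ≤ n) with rfl | rfl | h5
    · exact dichotomy_of_window (s := 0) (by norm_num) (by norm_num) (by norm_num)
        winDich_three a b hab
    · exact dichotomy_of_window (s := 1) (by norm_num) (by norm_num) (by norm_num)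
        winDich_four a b hab
    obtain ⟨e, he, x, y, rfl, rfl⟩ : ∃ e < 2, ∃ x y, a = 2 * x + e ∧ b = 2 * y + e := by
      rcases Nat.even_or_odd' a with ⟨x, hx | hx⟩ <;> rcases Nat.even_or_odd' b with ⟨y, hy | hy⟩
      · exact ⟨0, by norm_num, x, y, hx, hy⟩
      · subst hx hy
        exact (parity_of_five fun i hi => hab i (by omega)).elim
      · subst hx hy
        exact (parity_of_five fun i hi => (hab i (by omega)).symm).elim
      · exact ⟨1, by norm_num, x, y, hx, hy⟩
    -- The number of letters of the preimage word that are visible in the block.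
    obtain ⟨m, hm⟩ : ∃ m, m = (n + e + 1) / 2 := ⟨_, rfl⟩
    have hlet : ∀ k < m, TM (x + k) = TM (y + k) := by
      intro k hk
      by_cases hke : e ≤ 2 * k
      · have := hab (2 * k - e) (by omega)
        rwa [show 2 * x + e + (2 * k - e) = 2 * (x + k) by omega,
          show 2 * y + e + (2 * k - e) = 2 * (y + k) by omega, TM_even, TM_even] at this
      · obtain rfl : k = 0 := by omega
        obtain rfl : e = 1 := by omega
        have := hab 0 (by omega)
        simp only [add_zero, TM_odd] at this ⊢
        have lx := TM_lt x
        have ly := TM_lt y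
        omega
    rcases ih m (by omega) (by omega) x y hlet with h | h | h
    · left
      intro i hi j hj
      have := agree_double (a := x) (b := y) (q := e + i) (q' := e + j)
        (fun k hk => hlet k (by omega)) (fun _ => h _ (by omega) _ (by omega))
      simpa only [Agree, add_assoc] using this
    · rcases swapped_double he hm hlet h with h | h
      · exact Or.inl h
      · exact Or.inr (Or.inl h)
    · rcases swapped_double he hm (fun k hk => (hlet k hk).symm) h with h | h
      · exact Or.inl fun i hi j hj => (h i hi j hj).symm
      · exact Or.inr (Or.inr h)

/-! ### Classification of subpermutations of the same form -/

/-- Subpermutations of `π_T` of length `n+1` with the same form, where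
`n = 2^r + c` with `0 ≤ c < 2^r`: if `c < 2^(r-1)+1` they are equal or a
complementary pair of type `c+1`; if `2^(r-1)+1 ≤ c` they are equal. -/
theorem sameForm_classification (n r c a b : ℕ) (hn : 4 < n) (hr : 2 ≤ r)
    (hc : c < 2 ^ r) (hnrc : n = 2 ^ r + c)
    (hform : SameForm (n + 1) a b) :
    (c < 2 ^ (r - 1) + 1 →
      SamePerm (n + 1) a b ∨ CompPair (c + 1) (n + 1) a b) ∧
    (2 ^ (r - 1) + 1 ≤ c → SamePerm (n + 1) a b) := by
  have hlet : ∀ i < n, TM (a + i) = TM (b + i) := by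
    intro i hi
    have h := hform i (by omega)
    rw [← add_assoc, ← add_assoc, prec_succ_iff, prec_succ_iff] at h
    have h1 := TM_lt (a + i)
    have h2 := TM_lt (b + i)
    omega
  have hlow : 2 ^ r ≤ n := by omega
  have hr1 : 2 ^ r = 2 * 2 ^ (r - 1) := by
    rw [← pow_succ']
    congr 1
    omega
  -- The exponent of a swapped word is forced to be `r`, because `2^r` is the largest power
  -- of two not exceeding `n`.
  have hswap : ∀ x y, Swapped n x y → SwappedAt n x y (2 ^ r) ∧ c ≤ 2 ^ (r - 1) := by
    rintro x y ⟨s, h1, h2, h3⟩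
    have hsr : s + 1 = r := by
      have ha : 2 ^ (s + 1) < 2 ^ (r + 1) := by rw [pow_succ 2 r]; omega
      have hb : 2 ^ r < 2 ^ (s + 2) := by
        have hpos : 0 < 2 ^ s := by positivity
        rw [pow_add]; omega
      have ha' := (Nat.pow_lt_pow_iff_right (by norm_num : 1 < 2)).1 ha
      have hb' := (Nat.pow_lt_pow_iff_right (by norm_num : 1 < 2)).1 hb
      omega
    subst hsr
    simp only [Nat.add_sub_cancel] at *
    exact ⟨h3, by omega⟩
  have hsame : (∀ i ≤ n, ∀ j ≤ n, Agree a b i j) → SamePerm (n + 1) a b :=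
    fun h i hi j hj => h i (by omega) j (by omega)
  rcases dichotomy n (by omega) a b hlet with h | h | h
  · exact ⟨fun _ => Or.inl (hsame h), fun _ => hsame h⟩
  · obtain ⟨h, hcs⟩ := hswap _ _ h
    refine ⟨fun _ => Or.inr ⟨by omega, by omega, -1, Or.inr rfl, ?_, ?_⟩, fun _ => by omega⟩
    · intro i hi
      obtain ⟨e1, e2, e3⟩ := h.ranks (by omega) (i := i) (by omega)
      have hidx : n + 1 - (c + 1) + i = i + 2 ^ r := by omega
      rw [hidx]
      refine ⟨?_, ?_, ?_⟩ <;> omega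
    · intro j hj1 hj2
      exact (h.rank_middle (by omega) (by omega) (by omega)).symm
  · obtain ⟨h, hcs⟩ := hswap _ _ h
    refine ⟨fun _ => Or.inr ⟨by omega, by omega, 1, Or.inl rfl, ?_, ?_⟩, fun _ => by omega⟩
    · intro i hi
      obtain ⟨e1, e2, e3⟩ := h.ranks (by omega) (i := i) (by omega)
      have hidx : n + 1 - (c + 1) + i = i + 2 ^ r := by omega
      rw [hidx]
      refine ⟨?_, ?_, ?_⟩ <;> omega
    · intro j hj1 hj2
      exact h.rank_middle (by omega) (by omega) (by omega)
end
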